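/- Let p be a prime, K = GL₂(ℤ_p), I'_p the Iwahori, J' = [[0,1],[1,0]], and A_n = diag(p^n, p^{-n}) for n ≥ 1. Then the Cartan double coset K A_n K decomposes as the disjoint union of the four Iwahori double cosets I'_p A_n I'_p, I'_p A_n J' I'_p, I'_p J' A_n I'_p, and I'_p J' A_n J' I'_p. -/

import Mathlib

/-!
Write `A = d • diag(q, 1)` with `d = p⁻ⁿ` and `q = p²ⁿ`: everything happens for the matrix
`D = diag(q, 1)` over a local ring whose maximal ideal contains `q`. An invertible matrix outside
the Iwahori is moved into it by a transvection followed by the swap `w`. Moving the transvection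
across `D` multiplies its parameter by `q` and turns it into an element of the Iwahori, so only
`D`, `D w`, `w D` and `w D w` are left. Modulo the maximal ideal these become the four matrix units,
and `(i, j)` can be recovered from `h * single i j 1 * k` when `h` and `k` are invertible and upper
triangular.
-/

open Matrix IsLocalRing DoubleCoset

lemma image_smul_map_doubleCoset {α M N Φ : Type*} [Mul M] [Mul N] [SMul α N] [SMulCommClass α N N]
    [IsScalarTower α N N] [FunLike Φ M N] [MulHomClass Φ M N] (φ : Φ) (c : α) (x : M)
    (s t : Set M) :
    (fun y => c • φ y) '' doubleCoset x s t = doubleCoset (c • φ x) (φ '' s) (φ '' t) := by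
  simp only [doubleCoset_eq_image2, Set.image_image2, Set.image2_image_left,
    Set.image2_image_right, map_mul, mul_smul_comm, smul_mul_assoc]

section Matrix

variable {n R : Type*} [Fintype n]

lemma mul_single_one_mul_apply [DecidableEq n] [Semiring R] (h k : Matrix n n R) (i j a b : n) :
    (h * single i j (1 : R) * k : Matrix n n R) a b = h a i * k j b := by
  simp [mul_apply, single_apply, ite_and, Finset.sum_ite_eq]

lemma swap_mul_single [DecidableEq n] [Semiring R] (i j a b : n) (c : R) :
    swap R i j * single a b c = single (Equiv.swap i j a) b c := by
  rw [swap, PEquiv.toMatrix_toPEquiv_mul]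
  ext
  simp only [submatrix_apply, single_apply, id, Equiv.swap_apply_eq_iff]

lemma single_mul_swap [DecidableEq n] [Semiring R] (i j a b : n) (c : R) :
    single a b c * swap R i j = single a (Equiv.swap i j b) c := by
  rw [swap, PEquiv.mul_toMatrix_toPEquiv]
  ext
  simp only [submatrix_apply, single_apply, id, Equiv.symm_swap, Equiv.swap_apply_eq_iff]

lemma swap_mul_transvection_mul_swap [DecidableEq n] [CommRing R] (i j : n) (c : R) :
    swap R i j * transvection i j c * swap R i j = transvection j i c := by
  simp [transvection, mul_add, add_mul, swap_mul_self, swap_mul_single, single_mul_swap]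

lemma diagonal_mul_transvection [DecidableEq n] [CommRing R] {v : n → R} {i j : n} {b c : R}
    (h : v i * b = c * v j) :
    diagonal v * transvection i j b = transvection i j c * diagonal v := by
  have h_single : diagonal v * single i j b = single i j c * diagonal v := by
    ext r s
    simp only [diagonal_mul, mul_diagonal, single_apply]
    grind
  simp [transvection, mul_add, add_mul, h_single]

lemma isUnit_transvection [DecidableEq n] [CommRing R] {i j : n} (hij : i ≠ j) (c : R) :
    IsUnit (transvection i j c) := by
  simp [isUnit_iff_isUnit_det, det_transvection_of_ne i j hij]

lemma isUnit_swap [DecidableEq n] [CommRing R] (i j : n) : IsUnit (swap R i j) :=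
  IsUnit.of_mul_eq_one _ (swap_mul_self i j)

variable [LinearOrder n]

lemma isUnit_apply_self_of_isUpperTriangular [CommRing R] {h : Matrix n n R}
    (hh : h.IsUpperTriangular) (hu : IsUnit h) (i : n) : IsUnit (h i i) := by
  rw [isUnit_iff_isUnit_det, det_of_isUpperTriangular hh, IsUnit.prod_univ_iff] at hu
  exact hu i

variable [CommRing R] [IsDomain R] {h k h' k' : Matrix n n R} {i j i' j' : n}

lemma le_and_le_of_mul_single_mul_eq (hh : h.IsUpperTriangular) (hk : k.IsUpperTriangular)
    (hh' : h' i' i' ≠ 0) (hk' : k' j' j' ≠ 0)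
    (e : h * single i j (1 : R) * k = h' * single i' j' (1 : R) * k') : i' ≤ i ∧ j ≤ j' := by
  have e' : h i' i * k j j' = h' i' i' * k' j' j' := by
    simpa only [mul_single_one_mul_apply] using congrFun₂ e i' j'
  have hne : h i' i * k j j' ≠ 0 := e' ▸ mul_ne_zero hh' hk'
  exact ⟨not_lt.1 fun hlt => left_ne_zero_of_mul hne (hh hlt),
    not_lt.1 fun hlt => right_ne_zero_of_mul hne (hk hlt)⟩

lemma eq_and_eq_of_mul_single_mul_eq (hh : h.IsUpperTriangular) (hk : k.IsUpperTriangular)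
    (hh' : h'.IsUpperTriangular) (hk' : k'.IsUpperTriangular) (uh : IsUnit h) (uk : IsUnit k)
    (uh' : IsUnit h') (uk' : IsUnit k')
    (e : h * single i j (1 : R) * k = h' * single i' j' (1 : R) * k') : i = i' ∧ j = j' := by
  have diag_ne_zero {m : Matrix n n R} (hm : m.IsUpperTriangular) (um : IsUnit m) (r : n) :
      m r r ≠ 0 := (isUnit_apply_self_of_isUpperTriangular hm um r).ne_zero
  obtain ⟨hi, hj⟩ := le_and_le_of_mul_single_mul_eq hh hk
    (diag_ne_zero hh' uh' i') (diag_ne_zero hk' uk' j') e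
  obtain ⟨hi', hj'⟩ := le_and_le_of_mul_single_mul_eq hh' hk'
    (diag_ne_zero hh uh i) (diag_ne_zero hk uk j) e.symm
  exact ⟨le_antisymm hi' hi, le_antisymm hj hj'⟩

end Matrix

section Iwahori

variable {n R : Type*} [Fintype n] [LinearOrder n] [CommRing R] [IsLocalRing R]

variable (n R) in
/-- The standard Iwahori subgroup of `GLₙ(R)` for a local ring `R`: the invertible matrices that are
upper triangular modulo the maximal ideal. It is encoded as a submonoid of the matrix ring because
the double cosets of interest have non-invertible representatives over `R`. -/
def iwahori : Submonoid (Matrix n n R) where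
  carrier := {h | IsUnit h ∧ (h.map (residue R)).IsUpperTriangular}
  one_mem' := ⟨isUnit_one, by simpa using blockTriangular_one⟩
  mul_mem' := fun ha hb => ⟨ha.1.mul hb.1, by simpa [Matrix.map_mul] using ha.2.mul hb.2⟩

lemma mem_iwahori {h : Matrix n n R} :
    h ∈ iwahori n R ↔ IsUnit h ∧ (h.map (residue R)).IsUpperTriangular := Iff.rfl

lemma mem_iwahori_fin_two {h : Matrix (Fin 2) (Fin 2) R} :
    h ∈ iwahori (Fin 2) R ↔ IsUnit h ∧ h 1 0 ∈ maximalIdeal R := by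
  simp [mem_iwahori, BlockTriangular, Fin.forall_fin_two]

lemma transvection_mem_iwahori {i j : n} {c : R} (hij : i ≠ j) (h : i < j ∨ c ∈ maximalIdeal R) :
    transvection i j c ∈ iwahori n R := by
  refine mem_iwahori.2 ⟨isUnit_transvection hij c, ?_⟩
  have h_map : (transvection i j c).map (residue R) = transvection i j (residue R c) := by
    simp [transvection, Matrix.map_add]
  rw [h_map]
  rcases h with hlt | hc
  · exact blockTriangular_transvection hlt.le _
  · rw [(residue_eq_zero_iff c).2 hc, transvection_zero]
    exact blockTriangular_one

lemma disjoint_doubleCoset_iwahori {X Y : Matrix n n R} {i j i' j' : n}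
    (hX : X.map (residue R) = single i j 1) (hY : Y.map (residue R) = single i' j' 1)
    (hne : (i, j) ≠ (i', j')) :
    Disjoint (doubleCoset X (iwahori n R) (iwahori n R))
      (doubleCoset Y (iwahori n R) (iwahori n R)) := by
  rw [Set.disjoint_left]
  intro g hgX hgY
  obtain ⟨h, hh, k, hk, rfl⟩ := mem_doubleCoset.1 hgX
  obtain ⟨h', hh', k', hk', e⟩ := mem_doubleCoset.1 hgY
  have e_residue : h.map (residue R) * single i j 1 * k.map (residue R) =
      h'.map (residue R) * single i' j' 1 * k'.map (residue R) := by
    rw [← hX, ← hY]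
    simpa only [Matrix.map_mul] using congrArg (Matrix.map · (residue R)) e
  have isUnit_residue {m : Matrix n n R} (hm : m ∈ iwahori n R) : IsUnit (m.map (residue R)) :=
    hm.1.map (residue R).mapMatrix
  obtain ⟨hi, hj⟩ := eq_and_eq_of_mul_single_mul_eq hh.2 hk.2 hh'.2 hk'.2 (isUnit_residue hh)
    (isUnit_residue hk) (isUnit_residue hh') (isUnit_residue hk') e_residue
  exact hne (Prod.ext hi hj)

end Iwahori

section Cartan

variable {R : Type*} [CommRing R] [IsLocalRing R] {k X : Matrix (Fin 2) (Fin 2) R} {q : R}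

local notation "K" => (IsUnit.submonoid (Matrix (Fin 2) (Fin 2) R) : Set _)
local notation "I" => (iwahori (Fin 2) R : Set _)
local notation "w" => swap R (0 : Fin 2) 1

lemma exists_eq_transvection_mul_swap_mul (hk : IsUnit k) (h : k ∉ iwahori (Fin 2) R) :
    ∃ x, ∃ b ∈ iwahori (Fin 2) R, k = transvection 0 1 x * w * b := by
  have hu : IsUnit (k 1 0) := by simpa [mem_iwahori_fin_two, hk] using h
  obtain ⟨x, hx⟩ : ∃ x, k 0 0 + -x * k 1 0 = 0 := ⟨k 0 0 * ↑hu.unit⁻¹, by simp [mul_assoc]⟩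
  refine ⟨x, w * (transvection 0 1 (-x) * k), mem_iwahori_fin_two.2 ⟨?_, ?_⟩, ?_⟩
  · exact (isUnit_swap 0 1).mul ((isUnit_transvection zero_ne_one (-x)).mul hk)
  · rw [swap_mul_apply_right, transvection_mul_apply_same, hx]
    exact zero_mem _
  · rw [← mul_assoc, mul_assoc _ w w, swap_mul_self, mul_one, ← mul_assoc,
      transvection_mul_transvection_same 0 1 zero_ne_one, add_neg_cancel, transvection_zero,
      one_mul]

lemma exists_eq_mul_transvection (hk : IsUnit k) (h : k * w ∉ iwahori (Fin 2) R) :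
    ∃ b ∈ iwahori (Fin 2) R, ∃ x, k = b * transvection 1 0 x := by
  have hu : IsUnit (k 1 1) := by simpa [mem_iwahori_fin_two, hk.mul (isUnit_swap 0 1)] using h
  obtain ⟨x, hx⟩ : ∃ x, k 1 0 + -x * k 1 1 = 0 := ⟨k 1 0 * ↑hu.unit⁻¹, by simp [mul_assoc]⟩
  refine ⟨k * transvection 1 0 (-x), mem_iwahori_fin_two.2 ⟨?_, ?_⟩, x, ?_⟩
  · exact hk.mul (isUnit_transvection one_ne_zero (-x))
  · rw [mul_transvection_apply_same, hx]
    exact zero_mem _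
  · rw [mul_assoc, transvection_mul_transvection_same 1 0 one_ne_zero, neg_add_cancel,
      transvection_zero, mul_one]

lemma doubleCoset_iwahori_isUnit_eq_union
    (hX : ∀ x, ∃ b ∈ iwahori (Fin 2) R, X * transvection 0 1 x = b * X) :
    doubleCoset X I K = doubleCoset X I I ∪ doubleCoset (X * w) I I := by
  ext g
  simp only [Set.mem_union, mem_doubleCoset]
  constructor
  · rintro ⟨h, hh, k, hk, rfl⟩
    by_cases hkI : k ∈ iwahori (Fin 2) R
    · exact .inl ⟨h, hh, k, hkI, rfl⟩
    obtain ⟨x, k, hk', rfl⟩ := exists_eq_transvection_mul_swap_mul hk hkI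
    obtain ⟨b, hb, hXb⟩ := hX x
    refine .inr ⟨h * b, mul_mem hh hb, k, hk', ?_⟩
    calc h * X * (transvection 0 1 x * w * k)
      _ = h * (X * transvection 0 1 x) * w * k := by simp only [mul_assoc]
      _ = h * b * (X * w) * k := by rw [hXb]; simp only [mul_assoc]
  · rintro (⟨h, hh, k, hk, rfl⟩ | ⟨h, hh, k, hk, rfl⟩)
    · exact ⟨h, hh, k, hk.1, rfl⟩
    · exact ⟨h, hh, w * k, (isUnit_swap 0 1).mul hk.1, by simp only [mul_assoc]⟩

lemma doubleCoset_isUnit_isUnit_eq_union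
    (hX : ∀ x, ∃ k, IsUnit k ∧ transvection 1 0 x * X = X * k) :
    doubleCoset X K K = doubleCoset X I K ∪ doubleCoset (w * X) I K := by
  ext g
  simp only [Set.mem_union, mem_doubleCoset]
  constructor
  · rintro ⟨h, hh, k, hk, rfl⟩
    by_cases hhI : h * w ∈ iwahori (Fin 2) R
    · refine .inr ⟨h * w, hhI, k, hk, ?_⟩
      rw [← mul_assoc, mul_assoc h w w, swap_mul_self, mul_one]
    obtain ⟨h, hh', x, rfl⟩ := exists_eq_mul_transvection hh hhI
    obtain ⟨l, hl, hXl⟩ := hX x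
    refine .inl ⟨h, hh', l * k, hl.mul hk, ?_⟩
    calc h * transvection 1 0 x * X * k
      _ = h * (transvection 1 0 x * X) * k := by simp only [mul_assoc]
      _ = h * X * (l * k) := by rw [hXl]; simp only [mul_assoc]
  · rintro (⟨h, hh, k, hk, rfl⟩ | ⟨h, hh, k, hk, rfl⟩)
    · exact ⟨h, hh.1, k, hk, rfl⟩
    · exact ⟨h * w, hh.1.mul (isUnit_swap 0 1), k, hk, by simp only [mul_assoc]⟩

theorem doubleCoset_diagonal_isUnit_eq_union (hq : q ∈ maximalIdeal R) :
    doubleCoset (diagonal ![q, 1]) K K =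
      doubleCoset (diagonal ![q, 1]) I I ∪ doubleCoset (diagonal ![q, 1] * w) I I ∪
        doubleCoset (w * diagonal ![q, 1]) I I ∪ doubleCoset (w * diagonal ![q, 1] * w) I I := by
  have upper (x : R) :
      diagonal ![q, 1] * transvection 0 1 x = transvection 0 1 (q * x) * diagonal ![q, 1] :=
    diagonal_mul_transvection (by simp)
  have lower (x : R) :
      transvection 1 0 x * diagonal ![q, 1] = diagonal ![q, 1] * transvection 1 0 (q * x) :=
    (diagonal_mul_transvection (by simp [mul_comm])).symm
  rw [doubleCoset_isUnit_isUnit_eq_union fun x =>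
      ⟨_, isUnit_transvection one_ne_zero _, lower x⟩,
    doubleCoset_iwahori_isUnit_eq_union fun x =>
      ⟨_, transvection_mem_iwahori zero_ne_one (.inl zero_lt_one), upper x⟩,
    doubleCoset_iwahori_isUnit_eq_union fun x => ⟨transvection 1 0 (q * x), ?_, ?_⟩,
    Set.union_assoc _ _ (doubleCoset (w * diagonal ![q, 1] * w) I I)]
  · exact transvection_mem_iwahori one_ne_zero (.inr (Ideal.mul_mem_right x _ hq))
  · calc w * diagonal ![q, 1] * transvection 0 1 x
      _ = w * transvection 0 1 (q * x) * diagonal ![q, 1] := by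
        rw [mul_assoc, upper, mul_assoc]
      _ = w * transvection 0 1 (q * x) * w * (w * diagonal ![q, 1]) := by
        rw [← mul_assoc, mul_assoc _ w w, swap_mul_self, mul_one]
      _ = transvection 1 0 (q * x) * (w * diagonal ![q, 1]) := by
        rw [swap_mul_transvection_mul_swap]

lemma map_residue_diagonal (hq : q ∈ maximalIdeal R) :
    (diagonal ![q, 1]).map (residue R) = single 1 1 1 := by
  ext i j
  fin_cases i <;> fin_cases j <;> simp [hq]

end Cartan

theorem cartan_eq_four_iwahori_general {R F : Type*} [CommRing R] [IsLocalRing R] [CommRing F]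
    (φ : R →+* F) (hφ : Function.Injective φ) {q : R} (hq : q ∈ maximalIdeal R) {a d : F}
    (ha : a = d * φ q) (hd : IsLeftRegular d) :
    let K : Set (Matrix (Fin 2) (Fin 2) F) :=
      {g | ∃ h : Matrix (Fin 2) (Fin 2) R, IsUnit h.det ∧ g = h.map φ}
    let I : Set (Matrix (Fin 2) (Fin 2) F) :=
      {g | ∃ h : Matrix (Fin 2) (Fin 2) R,
        IsUnit h.det ∧ h 1 0 ∈ maximalIdeal R ∧ g = h.map φ}
    let A : Matrix (Fin 2) (Fin 2) F := !![a, 0; 0, d]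
    let J' : Matrix (Fin 2) (Fin 2) F := !![0, 1; 1, 0]
    let DC : Matrix (Fin 2) (Fin 2) F → Set (Matrix (Fin 2) (Fin 2) F) :=
      fun x => {g | ∃ k₁ ∈ I, ∃ k₂ ∈ I, g = k₁ * x * k₂}
    ({g | ∃ k₁ ∈ K, ∃ k₂ ∈ K, g = k₁ * A * k₂}
        = DC A ∪ DC (A * J') ∪ DC (J' * A) ∪ DC (J' * A * J')) ∧
    Disjoint (DC A) (DC (A * J')) ∧ Disjoint (DC A) (DC (J' * A)) ∧
    Disjoint (DC A) (DC (J' * A * J')) ∧ Disjoint (DC (A * J')) (DC (J' * A)) ∧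
    Disjoint (DC (A * J')) (DC (J' * A * J')) ∧
    Disjoint (DC (J' * A)) (DC (J' * A * J')) := by
  intro K I A J' DC
  have injective : Function.Injective fun X : Matrix (Fin 2) (Fin 2) R => d • φ.mapMatrix X :=
    hd.matrix.comp (Matrix.map_injective hφ)
  have hA : A = d • φ.mapMatrix (diagonal ![q, 1]) := by
    ext i j
    fin_cases i <;> fin_cases j <;> simp [A, ha]
  have hJ : J' = φ.mapMatrix (swap R 0 1) := by
    ext i j
    fin_cases i <;> fin_cases j <;> simp [J', swap]
  have hK : K = φ.mapMatrix '' (IsUnit.submonoid (Matrix (Fin 2) (Fin 2) R) : Set _) := by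
    ext g
    simp [K, isUnit_iff_isUnit_det, IsUnit.mem_submonoid_iff, eq_comm]
  have hI : I = φ.mapMatrix '' (iwahori (Fin 2) R : Set _) := by
    ext g
    simp [I, mem_iwahori_fin_two, isUnit_iff_isUnit_det, and_assoc, eq_comm]
  have hD := map_residue_diagonal hq
  have hDw : (diagonal ![q, 1] * swap R 0 1).map (residue R) = single 1 0 1 := by
    simp [Matrix.map_mul, hD, single_mul_swap]
  have hwD : (swap R 0 1 * diagonal ![q, 1]).map (residue R) = single 0 1 1 := by
    simp [Matrix.map_mul, hD, swap_mul_single]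
  have hwDw : (swap R 0 1 * diagonal ![q, 1] * swap R 0 1).map (residue R) = single 0 0 1 := by
    simp [Matrix.map_mul, hD, swap_mul_single, single_mul_swap]
  simp only [DC, ← mem_doubleCoset, Set.ofPred_mem_eq]
  simp only [hK, hI, hA, hJ, smul_mul_assoc, mul_smul_comm, ← map_mul,
    ← image_smul_map_doubleCoset, ← Set.image_union, Set.disjoint_image_iff injective]
  exact ⟨congrArg _ (doubleCoset_diagonal_isUnit_eq_union hq),
    disjoint_doubleCoset_iwahori hD hDw (by decide),
    disjoint_doubleCoset_iwahori hD hwD (by decide),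
    disjoint_doubleCoset_iwahori hD hwDw (by decide),
    disjoint_doubleCoset_iwahori hDw hwD (by decide),
    disjoint_doubleCoset_iwahori hDw hwDw (by decide),
    disjoint_doubleCoset_iwahori hwD hwDw (by decide)⟩

/-- The Cartan double coset `K Aₙ K` in `GL₂(ℚ_p)` (`K = GL₂(ℤ_p)`, `Aₙ = diag(pⁿ,p⁻ⁿ)`,
`n ≥ 1`) is the disjoint union of the four Iwahori double cosets
`I Aₙ I`, `I Aₙ J' I`, `I J' Aₙ I`, `I J' Aₙ J' I`. -/
theorem cartan_eq_four_iwahori (p n : ℕ) [Fact p.Prime] (hn : 1 ≤ n) :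
    let ι : Matrix (Fin 2) (Fin 2) ℤ_[p] → Matrix (Fin 2) (Fin 2) ℚ_[p] :=
      fun h => h.map (fun x => (x : ℚ_[p]))
    let K : Set (Matrix (Fin 2) (Fin 2) ℚ_[p]) :=
      {g | ∃ h : Matrix (Fin 2) (Fin 2) ℤ_[p], IsUnit h.det ∧ g = ι h}
    let I : Set (Matrix (Fin 2) (Fin 2) ℚ_[p]) :=
      {g | ∃ h : Matrix (Fin 2) (Fin 2) ℤ_[p],
        IsUnit h.det ∧ (p : ℤ_[p]) ∣ h 1 0 ∧ g = ι h}
    let A : Matrix (Fin 2) (Fin 2) ℚ_[p] := !![(p:ℚ_[p])^n, 0; 0, ((p:ℚ_[p])^n)⁻¹]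
    let J' : Matrix (Fin 2) (Fin 2) ℚ_[p] := !![0, 1; 1, 0]
    let DC : Matrix (Fin 2) (Fin 2) ℚ_[p] → Set (Matrix (Fin 2) (Fin 2) ℚ_[p]) :=
      fun x => {g | ∃ k₁ ∈ I, ∃ k₂ ∈ I, g = k₁ * x * k₂}
    ({g | ∃ k₁ ∈ K, ∃ k₂ ∈ K, g = k₁ * A * k₂}
        = DC A ∪ DC (A * J') ∪ DC (J' * A) ∪ DC (J' * A * J')) ∧
    Disjoint (DC A) (DC (A * J')) ∧ Disjoint (DC A) (DC (J' * A)) ∧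
    Disjoint (DC A) (DC (J' * A * J')) ∧ Disjoint (DC (A * J')) (DC (J' * A)) ∧
    Disjoint (DC (A * J')) (DC (J' * A * J')) ∧
    Disjoint (DC (J' * A)) (DC (J' * A * J')) := by
  have hp : (p : ℚ_[p]) ^ n ≠ 0 := pow_ne_zero n (Nat.cast_ne_zero.2 (NeZero.ne p))
  have hq : (p : ℤ_[p]) ^ (2 * n) ∈ maximalIdeal ℤ_[p] :=
    Ideal.pow_mem_of_mem _ ((mem_maximalIdeal _).2 PadicInt.p_nonunit) (2 * n) (by omega)
  have ha : (p : ℚ_[p]) ^ n =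
      ((p : ℚ_[p]) ^ n)⁻¹ * PadicInt.Coe.ringHom ((p : ℤ_[p]) ^ (2 * n)) := by
    rw [map_pow, map_natCast, two_mul, pow_add, inv_mul_cancel_left₀ hp]
  have h := cartan_eq_four_iwahori_general PadicInt.Coe.ringHom Subtype.coe_injective hq ha
    (IsRegular.of_ne_zero (inv_ne_zero hp)).left
  simp only [PadicInt.maximalIdeal_eq_span_p, Ideal.mem_span_singleton] at h
  exact h
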